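/- Let A ⊆ ℝ (or a Polish space) be an analytic set with ℋ^λ(A) = ∞ for some λ > 0. Then for every r > 0 there exists a closed (compact) subset F_r ⊆ A with r ≤ ℋ^λ(F_r) < ∞. -/

import Mathlib

open MeasureTheory
open scoped ENNReal

/-!
Coding points by their dyadic digits makes `μH[l]` comparable with the supremum over `k` of the
outer measures `netContent c k` on a space of sequences, which only use coverings by cylinders of
length at least `k`. Cylinders being nested or disjoint, the words of two coverings that are not
minimal in their union, together with the common words, form a further covering of what is covered
by both. Hence net contents are continuous along increasing sequences of arbitrary sets, i.e. they
are Choquet capacities, and an analytic set contains compact sets of almost the same content.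

Among the compact subsets of a compact set having at least its content of level `k`, choose a
minimal one, `F`. If for some `x ∈ F` the part of `F` in the cylinder of length `k` around `x` cost
more than that cylinder at level `k + 1`, it would still do so after the removal of a small cylinder
around `x`, and the content of level `k` of `F` would be unchanged. So passing to level `k + 1` does
not increase the content of `F`, and by induction all its contents of higher level are equal.
-/

open Set Filter Topology PiNat
open scoped NNReal

section Words

variable {α : Type*}

theorem res_suffix_res (x : ℕ → α) {m n : ℕ} (h : m ≤ n) : res x m <:+ res x n := by
  induction n, h using Nat.le_induction with
  | base => exact List.suffix_rfl
  | succ n _ ih => exact ih.trans (List.suffix_cons _ _)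

theorem eq_res_of_suffix_res {x : ℕ → α} {n : ℕ} {w : List α} (h : w <:+ res x n) :
    w = res x w.length := by
  have hle : w.length ≤ n := by simpa using h.length_le
  refine (List.suffix_of_suffix_length_le h (res_suffix_res x hle) ?_).eq_of_length ?_ <;> simp

/-- The words of `W` none of whose proper initial segments belongs to `W`. They have pairwise
disjoint cylinders, which cover the same sequences as the cylinders of `W`. -/
def minimalWords (W : Set (List α)) : Set (List α) := {w ∈ W | ∀ v ∈ W, v <:+ w → v = w}

theorem exists_res_mem_minimalWords {W : Set (List α)} {x : ℕ → α} (h : ∃ n, res x n ∈ W) :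
    ∃ n, res x n ∈ minimalWords W := by
  classical
  refine ⟨Nat.find h, Nat.find_spec h, fun v hv hvx ↦ hvx.eq_of_length_le ?_⟩
  rw [eq_res_of_suffix_res hvx] at hv
  simpa using Nat.find_min' h hv

/-- `W` is a set of words of length at least `k` whose cylinders cover `S`. Initial segments of
sequences are the reversed lists `PiNat.res x n`, so a word is an initial segment of another one
when it is a suffix of it in the sense of `<:+`. -/
structure IsWordCover (k : ℕ) (S : Set (ℕ → α)) (W : Set (List α)) : Prop where
  le_length : ∀ w ∈ W, k ≤ w.length
  exists_res_mem : ∀ x ∈ S, ∃ n, res x n ∈ W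

namespace IsWordCover

variable {k : ℕ} {S S' : Set (ℕ → α)} {U W : Set (List α)}

theorem mono (h : IsWordCover k S W) (hS : S' ⊆ S) : IsWordCover k S' W :=
  ⟨h.le_length, fun x hx ↦ h.exists_res_mem x (hS hx)⟩

theorem to_minimalWords (h : IsWordCover k S W) : IsWordCover k S (minimalWords W) :=
  ⟨fun w hw ↦ h.le_length w hw.1, fun x hx ↦ exists_res_mem_minimalWords (h.exists_res_mem x hx)⟩

theorem iUnion {ι : Sort*} {S : ι → Set (ℕ → α)} {W : ι → Set (List α)}
    (h : ∀ i, IsWordCover k (S i) (W i)) : IsWordCover k (⋃ i, S i) (⋃ i, W i) where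
  le_length w hw := by
    obtain ⟨i, hi⟩ := mem_iUnion.1 hw
    exact (h i).le_length w hi
  exists_res_mem x hx := by
    obtain ⟨i, hi⟩ := mem_iUnion.1 hx
    obtain ⟨n, hn⟩ := (h i).exists_res_mem x hi
    exact ⟨n, mem_iUnion_of_mem i hn⟩

/-- If two words of different covers are initial segments of the same sequence, one of them is
redundant; the redundant words and the common words cover everything once more. -/
theorem sdiff_minimalWords_union (hU : IsWordCover k S U) (hW : IsWordCover k S W) :
    IsWordCover k S ((minimalWords U ∪ W) \ minimalWords (U ∪ W) ∪ minimalWords U ∩ W) := by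
  refine ⟨?_, fun x hx ↦ ?_⟩
  · rintro w (⟨hw | hw, -⟩ | hw)
    exacts [hU.le_length w hw.1, hW.le_length w hw, hW.le_length w hw.2]
  · obtain ⟨m, hm⟩ := hU.to_minimalWords.exists_res_mem x hx
    obtain ⟨n, hn⟩ := hW.exists_res_mem x hx
    rcases lt_trichotomy m n with h | rfl | h
    · refine ⟨n, Or.inl ⟨Or.inr hn, fun hmin ↦ h.ne ?_⟩⟩
      simpa using congrArg List.length (hmin.2 _ (Or.inl hm.1) (res_suffix_res x h.le))
    · exact ⟨m, Or.inr ⟨hm, hn⟩⟩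
    · refine ⟨m, Or.inl ⟨Or.inl hm, fun hmin ↦ h.ne ?_⟩⟩
      simpa using congrArg List.length (hmin.2 _ (Or.inr hn) (res_suffix_res x h.le))

end IsWordCover

theorem minimalWords_union_subset (U W : Set (List α)) :
    minimalWords (U ∪ W) ⊆ minimalWords U ∪ W := by
  rintro w ⟨hw | hw, hmin⟩
  · exact Or.inl ⟨hw, fun v hv ↦ hmin v (Or.inl hv)⟩
  · exact Or.inr hw

end Words

section NetContent

variable {α : Type*} {c : List α → ℝ≥0∞} {k : ℕ}

/-- The outer measure on `ℕ → α` obtained from coverings by cylinders of length at least `k`, where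
the cylinder of the sequences starting with the word `w` costs `c w`. -/
noncomputable def netContent (c : List α → ℝ≥0∞) (k : ℕ) : OuterMeasure (ℕ → α) where
  measureOf S := ⨅ (W) (_ : IsWordCover k S W), ∑' w : W, c w
  empty := le_bot_iff.1 <| iInf₂_le_of_le ∅ ⟨by simp, by simp⟩ (by simp)
  mono h := le_iInf₂ fun W hW ↦ iInf₂_le W (hW.mono h)
  iUnion_nat S _ := by
    refine ENNReal.le_of_forall_pos_le_add fun ε hε hfin ↦ ?_
    obtain ⟨δ, hδ, hδε⟩ := ENNReal.exists_pos_sum_of_countable (ENNReal.coe_ne_zero.2 hε.ne') ℕ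
    have hcover (n : ℕ) : ∃ W, IsWordCover k (S n) W ∧
        ∑' w : W, c w < (⨅ (W) (_ : IsWordCover k (S n) W), ∑' w : W, c w) + δ n := by
      simpa [iInf_lt_iff] using
        ENNReal.lt_add_right (ENNReal.ne_top_of_tsum_ne_top hfin.ne n)
          (ENNReal.coe_ne_zero.2 (hδ n).ne')
    choose W hW hcost using hcover
    calc ⨅ (W) (_ : IsWordCover k (⋃ n, S n) W), ∑' w : W, c w
      _ ≤ ∑' w : ⋃ n, W n, c w := iInf₂_le _ (.iUnion hW)
      _ ≤ ∑' n, ∑' w : W n, c w := ENNReal.tsum_iUnion_le_tsum c W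
      _ ≤ ∑' n, ((⨅ (W) (_ : IsWordCover k (S n) W), ∑' w : W, c w) + δ n) :=
        ENNReal.tsum_le_tsum fun n ↦ (hcost n).le
      _ ≤ _ := by
        rw [ENNReal.tsum_add]
        gcongr

theorem netContent_le_tsum {S : Set (ℕ → α)} {W : Set (List α)} (h : IsWordCover k S W) :
    netContent c k S ≤ ∑' w : W, c w :=
  iInf₂_le W h

theorem le_netContent_iff {S : Set (ℕ → α)} {a : ℝ≥0∞} :
    a ≤ netContent c k S ↔ ∀ W, IsWordCover k S W → a ≤ ∑' w : W, c w :=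
  le_iInf₂_iff

theorem netContent_lt_iff {S : Set (ℕ → α)} {a : ℝ≥0∞} :
    netContent c k S < a ↔ ∃ W, IsWordCover k S W ∧ ∑' w : W, c w < a := by
  simp only [← not_le, le_netContent_iff, not_forall, exists_prop]

theorem netContent_mono_level {k' : ℕ} (h : k ≤ k') (S : Set (ℕ → α)) :
    netContent c k S ≤ netContent c k' S :=
  le_netContent_iff.2 fun _ hW ↦
    netContent_le_tsum ⟨fun w hw ↦ h.trans (hW.le_length w hw), hW.exists_res_mem⟩

theorem netContent_setOf_res_eq_le {w : List α} (h : k ≤ w.length) :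
    netContent c k {x | res x w.length = w} ≤ c w := by
  refine (netContent_le_tsum (W := {w}) ⟨by simpa, fun x hx ↦ ⟨w.length, hx⟩⟩).trans_eq ?_
  simp

theorem netContent_cylinder_le (x : ℕ → α) {n : ℕ} (h : k ≤ n) :
    netContent c k (cylinder x n) ≤ c (res x n) := by
  simpa [cylinder_eq_res] using netContent_setOf_res_eq_le (c := c) (w := res x n) (by simpa)

theorem tsum_minimalWords_union_add_netContent_le {S : Set (ℕ → α)} {U W : Set (List α)}
    (hU : IsWordCover k S U) (hW : IsWordCover k S W) :
    ∑' w : minimalWords (U ∪ W), c w + netContent c k S ≤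
      ∑' w : minimalWords U, c w + ∑' w : W, c w := by
  grw [netContent_le_tsum (hU.sdiff_minimalWords_union hW)]
  simp only [tsum_subtype, ← ENNReal.tsum_add]
  refine ENNReal.tsum_le_tsum fun w ↦ ?_
  have := @minimalWords_union_subset _ U W w
  by_cases h₁ : w ∈ minimalWords U <;> by_cases h₂ : w ∈ W <;>
    by_cases h₃ : w ∈ minimalWords (U ∪ W) <;> simp_all

theorem tsum_minimalWords_accumulate_le {S : ℕ → Set (ℕ → α)} (hS : Monotone S)
    (hfin : ∀ n, netContent c k (S n) ≠ ∞) {W : ℕ → Set (List α)} {δ : ℕ → ℝ≥0∞}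
    (hW : ∀ n, IsWordCover k (S n) (W n))
    (hcost : ∀ n, ∑' w : W n, c w ≤ netContent c k (S n) + δ n) (n : ℕ) :
    ∑' w : minimalWords (accumulate W n), c w ≤
      netContent c k (S n) + ∑ i ∈ Finset.range (n + 1), δ i := by
  induction n with
  | zero =>
    rw [accumulate_zero_nat, Finset.sum_range_one]
    exact (ENNReal.tsum_mono_subtype c fun w hw ↦ hw.1).trans (hcost 0)
  | succ n ih =>
    have hcover : IsWordCover k (S n) (accumulate W n) :=
      (IsWordCover.iUnion fun i ↦ .iUnion fun _ ↦ hW i).mono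
        (subset_biUnion_of_mem (mem_Iic.2 le_rfl))
    rw [accumulate_succ]
    refine ENNReal.le_of_add_le_add_right (hfin n) ?_
    calc ∑' w : minimalWords (accumulate W n ∪ W (n + 1)), c w + netContent c k (S n)
      _ ≤ ∑' w : minimalWords (accumulate W n), c w + ∑' w : W (n + 1), c w :=
        tsum_minimalWords_union_add_netContent_le hcover ((hW (n + 1)).mono (hS n.le_succ))
      _ ≤ (netContent c k (S n) + ∑ i ∈ Finset.range (n + 1), δ i) +
          (netContent c k (S (n + 1)) + δ (n + 1)) := add_le_add ih (hcost (n + 1))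
      _ = _ := by
        rw [Finset.sum_range_succ _ (n + 1)]
        ring

theorem tsum_minimalWords_iUnion_le (W : ℕ → Set (List α)) :
    ∑' w : minimalWords (⋃ n, W n), c w ≤ ⨆ n, ∑' w : minimalWords (accumulate W n), c w := by
  rw [tsum_subtype, ENNReal.tsum_eq_iSup_sum]
  refine iSup_le fun s ↦ ?_
  have hmem : ∀ᶠ n in atTop, ∀ w ∈ s,
      w ∈ minimalWords (⋃ n, W n) → w ∈ minimalWords (accumulate W n) := by
    refine (eventually_all_finset s).2 fun w _ ↦ ?_
    by_cases hw : w ∈ minimalWords (⋃ n, W n)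
    · obtain ⟨m, hm⟩ := mem_iUnion.1 hw.1
      filter_upwards [eventually_ge_atTop m] with n hmn _
      exact ⟨mem_accumulate.2 ⟨m, hmn, hm⟩, fun v hv ↦ hw.2 v (accumulate_subset_iUnion n hv)⟩
    · exact .of_forall fun _ h ↦ absurd h hw
  obtain ⟨n, hn⟩ := hmem.exists
  refine le_iSup_of_le n ?_
  rw [tsum_subtype]
  refine (Finset.sum_le_sum fun w hw ↦ ?_).trans (ENNReal.sum_le_tsum s)
  exact indicator_apply_le' (fun h ↦ (indicator_of_mem (hn w hw h) c).ge) fun _ ↦ zero_le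

theorem netContent_iUnion_le {S : ℕ → Set (ℕ → α)} (hS : Monotone S) :
    netContent c k (⋃ n, S n) ≤ ⨆ n, netContent c k (S n) := by
  refine ENNReal.le_of_forall_pos_le_add fun ε hε hfin ↦ ?_
  have hfin (n : ℕ) : netContent c k (S n) ≠ ∞ := ((le_iSup _ n).trans_lt hfin).ne
  obtain ⟨δ, hδ, hδε⟩ := ENNReal.exists_pos_sum_of_countable (ENNReal.coe_ne_zero.2 hε.ne') ℕ
  have hcover (n : ℕ) : ∃ W, IsWordCover k (S n) W ∧ ∑' w : W, c w < netContent c k (S n) + δ n :=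
    netContent_lt_iff.1 (ENNReal.lt_add_right (hfin n) (ENNReal.coe_ne_zero.2 (hδ n).ne'))
  choose W hW hcost using hcover
  calc netContent c k (⋃ n, S n)
    _ ≤ ∑' w : minimalWords (⋃ n, W n), c w :=
      netContent_le_tsum (IsWordCover.iUnion hW).to_minimalWords
    _ ≤ ⨆ n, ∑' w : minimalWords (accumulate W n), c w := tsum_minimalWords_iUnion_le W
    _ ≤ ⨆ n, (netContent c k (S n) + ε) := by
      refine iSup_mono fun n ↦
        (tsum_minimalWords_accumulate_le hS hfin hW (fun n ↦ (hcost n).le) n).trans ?_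
      gcongr
      exact (ENNReal.sum_le_tsum _).trans hδε.le
    _ = (⨆ n, netContent c k (S n)) + ε := by rw [ENNReal.iSup_add]

section Capacity

variable {X : Type*} [TopologicalSpace X] {m : Set X → ℝ≥0∞}

/-- A capacity in the sense of Choquet. Continuity along decreasing sequences of compact sets is
replaced by outer regularity on compact sets. -/
structure IsCapacity (m : Set X → ℝ≥0∞) : Prop where
  mono : Monotone m
  iUnion_le : ∀ S : ℕ → Set X, Monotone S → m (⋃ n, S n) ≤ ⨆ n, m (S n)
  exists_isOpen_lt : ∀ K, IsCompact K → ∀ a, m K < a → ∃ U, IsOpen U ∧ K ⊆ U ∧ m U < a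

theorem exists_forall_cylinder_subset {E : ℕ → Type*} [∀ n, TopologicalSpace (E n)]
    [∀ n, DiscreteTopology (E n)] {K V : Set (∀ n, E n)} (hK : IsCompact K) (hV : IsOpen V)
    (h : K ⊆ V) : ∃ n, ∀ x ∈ K, cylinder x n ⊆ V := by
  refine hK.induction_on (p := fun S ↦ ∃ n, ∀ x ∈ S, cylinder x n ⊆ V) ⟨0, by simp⟩
    (fun S T hST ⟨n, hn⟩ ↦ ⟨n, fun x hx ↦ hn x (hST hx)⟩) ?_ fun x hx ↦ ?_
  · rintro S T ⟨m, hm⟩ ⟨n, hn⟩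
    refine ⟨max m n, fun x hx ↦ hx.elim (fun hx ↦ ?_) fun hx ↦ ?_⟩
    · exact (cylinder_anti x (le_max_left m n)).trans (hm x hx)
    · exact (cylinder_anti x (le_max_right m n)).trans (hn x hx)
  · obtain ⟨_, ⟨y, n, rfl⟩, hxy, hyV⟩ :=
      (isTopologicalBasis_cylinders E).exists_subset_of_mem_open (h hx) hV
    refine ⟨cylinder y n, mem_nhdsWithin_of_mem_nhds ((isOpen_cylinder E y n).mem_nhds hxy), n, ?_⟩
    intro z hz
    rwa [mem_cylinder_iff_eq.1 hz]

theorem isCompact_Iic_natSeq (b : ℕ → ℕ) : IsCompact (Iic b) := by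
  rw [← pi_univ_Iic]
  exact isCompact_univ_pi fun i ↦ (finite_Iic (b i)).isCompact

theorem exists_initial_bound_subset {b : ℕ → ℕ} {V : Set (ℕ → ℕ)} (hV : IsOpen V)
    (h : Iic b ⊆ V) : ∃ i, {x : ℕ → ℕ | ∀ j < i, x j ≤ b j} ⊆ V := by
  obtain ⟨i, hi⟩ := exists_forall_cylinder_subset (isCompact_Iic_natSeq b) hV h
  refine ⟨i, fun x hx ↦ hi (x ⊓ b) (mem_Iic.2 inf_le_right) fun j hj ↦ ?_⟩
  exact (inf_eq_left.2 (hx j hj)).symm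

namespace IsCapacity

theorem exists_forall_lt_image (hm : IsCapacity m) {f : (ℕ → ℕ) → X} {r : ℝ≥0∞}
    (hr : r < m (range f)) : ∃ b : ℕ → ℕ, ∀ i, r < m (f '' {x | ∀ j < i, x j ≤ b j}) := by
  have hstep (i : ℕ) (S : Set (ℕ → ℕ)) (hS : r < m (f '' S)) :
      ∃ v, r < m (f '' (S ∩ {x | x i ≤ v})) := by
    have hunion : f '' S = ⋃ v, f '' (S ∩ {x | x i ≤ v}) := by
      rw [← image_iUnion, ← inter_iUnion, inter_eq_left.2]
      exact fun x _ ↦ mem_iUnion.2 ⟨x i, le_refl (x i)⟩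
    rw [hunion] at hS
    refine lt_iSup_iff.1 (hS.trans_le (hm.iUnion_le _ fun v w hvw ↦ ?_))
    exact image_mono (inter_subset_inter_right _ fun x hx ↦ le_trans hx hvw)
  choose! v hv using hstep
  let S (i : ℕ) : Set (ℕ → ℕ) := i.rec univ fun i S ↦ S ∩ {x | x i ≤ v i S}
  have hS (i : ℕ) : S i = {x | ∀ j < i, x j ≤ v j (S j)} := by
    induction i with
    | zero => simp [S]
    | succ i ih =>
      change S i ∩ {x | x i ≤ v i (S i)} = _
      ext x
      simp only [ih, mem_inter_iff, mem_ofPred_eq, Nat.forall_lt_succ_right]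
  refine ⟨fun j ↦ v j (S j), fun i ↦ ?_⟩
  rw [← hS]
  induction i with
  | zero => rwa [show S 0 = univ from rfl, image_univ]
  | succ i ih => exact hv i (S i) ih

theorem exists_isCompact_lt (hm : IsCapacity m) {A : Set X} (hA : AnalyticSet A) {r : ℝ≥0∞}
    (hr : r < m A) : ∃ K ⊆ A, IsCompact K ∧ r < m K := by
  obtain ⟨r', hrr', hr'⟩ := exists_between hr
  rw [AnalyticSet] at hA
  obtain rfl | ⟨f, hf, rfl⟩ := hA
  · exact ⟨∅, subset_rfl, isCompact_empty, hr⟩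
  obtain ⟨b, hb⟩ := hm.exists_forall_lt_image hr'
  have hK : IsCompact (f '' Iic b) := (isCompact_Iic_natSeq b).image hf
  refine ⟨f '' Iic b, image_subset_range _ _, hK, hrr'.trans_le ?_⟩
  by_contra! hlt
  obtain ⟨U, hU, hKU, hUr⟩ := hm.exists_isOpen_lt _ hK _ hlt
  obtain ⟨i, hi⟩ := exists_initial_bound_subset (hU.preimage hf) (image_subset_iff.1 hKU)
  exact ((hb i).trans_le (hm.mono (image_subset_iff.2 hi))).not_gt hUr

theorem exists_minimal_isCompact [T2Space X] (hm : IsCapacity m) {K : Set X} (hK : IsCompact K) :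
    ∃ F ⊆ K, Minimal (fun F ↦ IsCompact F ∧ m K ≤ m F) F := by
  refine zorn_superset_nonempty {F | IsCompact F ∧ m K ≤ m F} (fun 𝒞 h𝒞 hchain hne ↦ ?_) K
    ⟨hK, le_rfl⟩
  have hcompact : IsCompact (⋂₀ 𝒞) := by
    obtain ⟨F, hF⟩ := hne
    exact (h𝒞 hF).1.of_isClosed_subset (isClosed_sInter fun s hs ↦ (h𝒞 hs).1.isClosed)
      (sInter_subset_of_mem hF)
  refine ⟨⋂₀ 𝒞, ⟨hcompact, ?_⟩, fun s hs ↦ sInter_subset_of_mem hs⟩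
  by_contra! hlt
  obtain ⟨U, hU, hsub, hUlt⟩ := hm.exists_isOpen_lt _ hcompact _ hlt
  have : Nonempty 𝒞 := hne.to_subtype
  have hdir : Directed (· ⊇ ·) fun F : 𝒞 ↦ F.1 := fun s t ↦
    (hchain.total s.2 t.2).elim (fun h ↦ ⟨s, subset_rfl, h⟩) fun h ↦ ⟨t, h, subset_rfl⟩
  rw [sInter_eq_iInter] at hsub
  obtain ⟨F, hFU⟩ := exists_subset_nhds_of_isCompact hdir (fun F ↦ (h𝒞 F.2).1)
    fun x hx ↦ hU.mem_nhds (hsub hx)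
  exact (((h𝒞 F.2).2.trans (hm.mono hFU)).trans_lt hUlt).false

end IsCapacity

end Capacity

theorem isCapacity_netContent [TopologicalSpace α] [DiscreteTopology α] :
    IsCapacity (netContent c k) where
  mono _ _ := measure_mono
  iUnion_le _ := netContent_iUnion_le
  exists_isOpen_lt K _ a ha := by
    obtain ⟨W, hW, hWa⟩ := netContent_lt_iff.1 ha
    refine ⟨{x | ∃ n, res x n ∈ W}, ?_, hW.exists_res_mem,
      (netContent_le_tsum ⟨hW.le_length, fun _ ↦ id⟩).trans_lt hWa⟩
    refine isOpen_iff_mem_nhds.2 fun x ⟨n, hn⟩ ↦ ?_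
    filter_upwards [(isOpen_cylinder _ x n).mem_nhds (self_mem_cylinder x n)] with y hy
    rw [cylinder_eq_res] at hy
    exact ⟨n, hy ▸ hn⟩

theorem netContent_lt_top_of_isCompact [TopologicalSpace α] [DiscreteTopology α]
    (hc : ∀ x, c (res x k) ≠ ∞) {K : Set (ℕ → α)} (hK : IsCompact K) : netContent c k K < ∞ := by
  refine hK.induction_on (by simp) (fun s t hst ht ↦ (measure_mono hst).trans_lt ht)
    (fun s t hs ht ↦ (measure_union_le s t).trans_lt (ENNReal.add_lt_top.2 ⟨hs, ht⟩))
    fun x _ ↦ ⟨cylinder x k, mem_nhdsWithin_of_mem_nhds ?_, ?_⟩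
  · exact (isOpen_cylinder _ x k).mem_nhds (self_mem_cylinder x k)
  · exact (netContent_cylinder_le x le_rfl).trans_lt (hc x).lt_top

theorem netContent_succ_le_of_forall [Countable α] {S : Set (ℕ → α)}
    (h : ∀ x ∈ S, netContent c (k + 1) (S ∩ cylinder x k) ≤ c (res x k)) :
    netContent c (k + 1) S ≤ netContent c k S := by
  refine le_netContent_iff.2 fun W hW ↦ ?_
  let C (w : List α) : Set (ℕ → α) := {x | res x w.length = w}
  have hle (w : W) : netContent c (k + 1) (S ∩ C w) ≤ c w := by
    rcases (hW.le_length w w.2).eq_or_lt' with hk | hk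
    · rcases (S ∩ C w).eq_empty_or_nonempty with h0 | ⟨x, hxS, hx⟩
      · simp [h0]
      · have hx' : res x k = w := hk ▸ hx
        simpa [C, cylinder_eq_res, hk, hx'] using h x hxS
    · exact (measure_mono inter_subset_right).trans (netContent_setOf_res_eq_le hk)
  have hcover : S ⊆ ⋃ w ∈ W, S ∩ C w := fun x hx ↦ by
    obtain ⟨n, hn⟩ := hW.exists_res_mem x hx
    exact mem_biUnion hn ⟨hx, by simp [C]⟩
  calc netContent c (k + 1) S
    _ ≤ ∑' w : W, netContent c (k + 1) (S ∩ C w) :=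
      (measure_mono hcover).trans (measure_biUnion_le _ W.to_countable _)
    _ ≤ ∑' w : W, c w := ENNReal.tsum_le_tsum hle

theorem netContent_union_cylinder_le {S : Set (ℕ → α)} {x : ℕ → α}
    (h : c (res x k) ≤ netContent c (k + 1) (S ∩ cylinder x k)) :
    netContent c k (S ∪ cylinder x k) ≤ netContent c k S := by
  refine le_netContent_iff.2 fun W hW ↦ ?_
  by_cases hxW : res x k ∈ W
  · refine netContent_le_tsum ⟨hW.le_length, ?_⟩
    rintro y (hy | hy)
    · exact hW.exists_res_mem y hy
    · rw [cylinder_eq_res] at hy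
      exact ⟨k, hy ▸ hxW⟩
  let V : Set (List α) := {w ∈ W | res x k <:+ w}
  have hV : IsWordCover (k + 1) (S ∩ cylinder x k) V := by
    refine ⟨fun w ⟨hw, hxw⟩ ↦ ?_, fun y ⟨hyS, hy⟩ ↦ ?_⟩
    · refine lt_of_le_of_ne (hW.le_length w hw) fun hk ↦ hxW ?_
      rwa [hxw.eq_of_length (by simpa)]
    · obtain ⟨n, hn⟩ := hW.exists_res_mem y hyS
      rw [cylinder_eq_res] at hy
      exact ⟨n, hn, hy ▸ res_suffix_res y (by simpa using hW.le_length _ hn)⟩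
  have hcover : IsWordCover k (S ∪ cylinder x k) ({res x k} ∪ W \ V) := by
    refine ⟨?_, fun y hy ↦ ?_⟩
    · rintro w (rfl | hw)
      exacts [by simp, hW.le_length w hw.1]
    by_cases hyx : res y k = res x k
    · exact ⟨k, Or.inl hyx⟩
    have hyS : y ∈ S := hy.resolve_right fun h ↦ hyx (by rwa [cylinder_eq_res] at h)
    obtain ⟨n, hn⟩ := hW.exists_res_mem y hyS
    exact ⟨n, Or.inr ⟨hn, fun hV ↦ hyx (by simpa using (eq_res_of_suffix_res hV.2).symm)⟩⟩
  calc netContent c k (S ∪ cylinder x k)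
    _ ≤ ∑' w : ({res x k} ∪ W \ V : Set (List α)), c w := netContent_le_tsum hcover
    _ ≤ c (res x k) + ∑' w : (W \ V : Set (List α)), c w :=
      (ENNReal.tsum_union_le c _ _).trans_eq (by rw [tsum_singleton])
    _ ≤ ∑' w : V, c w + ∑' w : (W \ V : Set (List α)), c w := by
      gcongr
      exact h.trans (netContent_le_tsum hV)
    _ = ∑' w : W, c w := by
      rw [← ENNReal.summable.tsum_union_disjoint disjoint_sdiff_right ENNReal.summable,
        union_sdiff_cancel (sep_subset W _)]

section Minimal

variable [TopologicalSpace α] [DiscreteTopology α] {a : ℝ≥0∞} {F : Set (ℕ → α)}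

theorem netContent_inter_cylinder_le_of_minimal
    (hc : ∀ x, Tendsto (fun n ↦ c (res x n)) atTop (𝓝 0))
    (hF : Minimal (fun F ↦ IsCompact F ∧ a ≤ netContent c k F) F) {x : ℕ → α} (hx : x ∈ F) :
    netContent c (k + 1) (F ∩ cylinder x k) ≤ c (res x k) := by
  by_contra! hlt
  obtain ⟨n, hn, hkn⟩ : ∃ n, c (res x k) + c (res x n) < netContent c (k + 1) (F ∩ cylinder x k) ∧
      k + 1 ≤ n := by
    have hlim := tendsto_const_nhds (x := c (res x k)).add (hc x)
    rw [add_zero] at hlim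
    exact ((hlim.eventually_lt_const hlt).and (eventually_ge_atTop _)).exists
  have hremain : c (res x k) ≤ netContent c (k + 1) (F \ cylinder x n ∩ cylinder x k) := by
    have hsplit : F ∩ cylinder x k ⊆ (F \ cylinder x n ∩ cylinder x k) ∪ cylinder x n :=
      fun y hy ↦ (em (y ∈ cylinder x n)).symm.imp (fun h ↦ ⟨⟨hy.1, h⟩, hy.2⟩) id
    refine (lt_of_add_lt_add_right (hn.trans_le ?_)).le
    calc netContent c (k + 1) (F ∩ cylinder x k)
      _ ≤ netContent c (k + 1) (F \ cylinder x n ∩ cylinder x k) +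
          netContent c (k + 1) (cylinder x n) := (measure_mono hsplit).trans (measure_union_le _ _)
      _ ≤ netContent c (k + 1) (F \ cylinder x n ∩ cylinder x k) + c (res x n) := by
        gcongr
        exact netContent_cylinder_le x hkn
  have hFsub : F ⊆ F \ cylinder x n ∪ cylinder x k := fun y hy ↦
    (em (y ∈ cylinder x n)).symm.imp (fun h ↦ ⟨hy, h⟩)
      fun h ↦ cylinder_anti x (k.le_succ.trans hkn) h
  have hprop : IsCompact (F \ cylinder x n) ∧ a ≤ netContent c k (F \ cylinder x n) :=
    ⟨hF.prop.1.diff (isOpen_cylinder _ x n), hF.prop.2.trans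
      ((measure_mono hFsub).trans (netContent_union_cylinder_le hremain))⟩
  exact (hF.le_of_le hprop sdiff_subset hx).2 (self_mem_cylinder x n)

theorem netContent_succ_le_of_minimal [Countable α]
    (hc : ∀ x, Tendsto (fun n ↦ c (res x n)) atTop (𝓝 0))
    (hF : Minimal (fun F ↦ IsCompact F ∧ a ≤ netContent c k F) F) {S : Set (ℕ → α)} (hS : S ⊆ F) :
    netContent c (k + 1) S ≤ netContent c k S :=
  netContent_succ_le_of_forall fun _ hx ↦
    (measure_mono (inter_subset_inter_left _ hS)).trans
      (netContent_inter_cylinder_le_of_minimal hc hF (hS hx))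

theorem minimal_netContent_of_le [Countable α]
    (hc : ∀ x, Tendsto (fun n ↦ c (res x n)) atTop (𝓝 0))
    (hF : Minimal (fun F ↦ IsCompact F ∧ a ≤ netContent c k F) F) {j : ℕ} (h : k ≤ j) :
    Minimal (fun F ↦ IsCompact F ∧ a ≤ netContent c j F) F := by
  induction j, h using Nat.le_induction with
  | base => exact hF
  | succ j _ ih =>
    refine ⟨⟨hF.prop.1, ih.prop.2.trans (netContent_mono_level j.le_succ F)⟩, fun F' hF' hle ↦ ?_⟩
    exact ih.le_of_le ⟨hF'.1, hF'.2.trans (netContent_succ_le_of_minimal hc ih hle)⟩ hle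

theorem netContent_le_of_minimal [Countable α]
    (hc : ∀ x, Tendsto (fun n ↦ c (res x n)) atTop (𝓝 0))
    (hF : Minimal (fun F ↦ IsCompact F ∧ a ≤ netContent c k F) F) {j : ℕ} (h : k ≤ j) :
    netContent c j F ≤ netContent c k F := by
  induction j, h using Nat.le_induction with
  | base => rfl
  | succ j h ih =>
    exact (netContent_succ_le_of_minimal hc (minimal_netContent_of_le hc hF h) le_rfl).trans ih

end Minimal

theorem exists_isCompact_lt_netContent [Countable α] [TopologicalSpace α] [DiscreteTopology α]
    (hc : ∀ x, Tendsto (fun n ↦ c (res x n)) atTop (𝓝 0)) (hck : ∀ x, c (res x k) ≠ ∞)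
    {A : Set (ℕ → α)} (hA : AnalyticSet A) {r : ℝ≥0∞} (hr : r < netContent c k A) :
    ∃ F ⊆ A, IsCompact F ∧ r < netContent c k F ∧ ⨆ j, netContent c j F < ∞ := by
  obtain ⟨K, hKA, hK, hrK⟩ := isCapacity_netContent.exists_isCompact_lt hA hr
  obtain ⟨F, hFK, hF⟩ := isCapacity_netContent.exists_minimal_isCompact (m := netContent c k) hK
  refine ⟨F, hFK.trans hKA, hF.prop.1, hrK.trans_le hF.prop.2, ?_⟩
  calc ⨆ j, netContent c j F
    _ ≤ netContent c k F := iSup_le fun j ↦ (netContent_mono_level (Nat.le_add_left j k) F).trans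
      (netContent_le_of_minimal hc hF (Nat.le_add_right k j))
    _ < ∞ := netContent_lt_top_of_isCompact hck hF.prop.1

end NetContent

section Coding

variable {α X : Type*} [EMetricSpace X] {e : X → ℕ → α} {δ : ℕ → ℝ≥0∞}

/-- `e` codes the points of `X` by sequences in such a way that two points whose codes share the
first `n` terms are at distance at most `δ n`, for large `n`. -/
structure IsCoding (e : X → ℕ → α) (δ : ℕ → ℝ≥0∞) : Prop where
  mesh_ne_top : ∀ n, δ n ≠ ∞
  antitone_mesh : Antitone δ
  tendsto_mesh : Tendsto δ atTop (𝓝 0)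
  edist_le : ∀ᶠ n in atTop, ∀ x y, res (e x) n = res (e y) n → edist x y ≤ δ n

namespace IsCoding

theorem comap_nhds_le [TopologicalSpace α] [DiscreteTopology α] (he : IsCoding e δ) (x : X) :
    comap e (𝓝 (e x)) ≤ 𝓝 x := by
  refine Metric.nhds_basis_eball.ge_iff.2 fun ε hε ↦ ?_
  obtain ⟨n, hn, hδ⟩ := (he.edist_le.and (he.tendsto_mesh.eventually_lt_const hε)).exists
  refine ⟨cylinder (e x) n, (isOpen_cylinder _ _ n).mem_nhds (self_mem_cylinder _ n), fun y hy ↦ ?_⟩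
  rw [cylinder_eq_res] at hy
  exact (hn y x hy).trans_lt hδ

theorem injective (he : IsCoding e δ) : Function.Injective e := by
  intro x y hxy
  refine edist_le_zero.1 (ge_of_tendsto he.tendsto_mesh ?_)
  filter_upwards [he.edist_le] with n hn using hn x y (by rw [hxy])

theorem isCompact_preimage [TopologicalSpace α] [DiscreteTopology α] (he : IsCoding e δ)
    {F : Set (ℕ → α)} (hF : IsCompact F) (hFe : F ⊆ range e) : IsCompact (e ⁻¹' F) := by
  refine isCompact_iff_ultrafilter_le_nhds.2 fun U hU ↦ ?_
  obtain ⟨y, hy, hUy⟩ := isCompact_iff_ultrafilter_le_nhds.1 hF (U.map e)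
    (tendsto_principal.2 (le_principal_iff.1 hU))
  obtain ⟨x, rfl⟩ := hFe hy
  exact ⟨x, hy, (map_le_iff_le_comap.1 hUy).trans (he.comap_nhds_le x)⟩

variable [MeasurableSpace X] [BorelSpace X] {l : ℝ}

theorem hausdorffMeasure_le_iSup_netContent [Countable α] (he : IsCoding e δ) (hl : 0 ≤ l)
    (S : Set X) : μH[l] S ≤ ⨆ k, netContent (fun w ↦ δ w.length ^ l) k (e '' S) := by
  refine le_of_forall_gt_imp_ge_of_dense fun a ha ↦ ?_
  have hlt (k : ℕ) : netContent (fun w ↦ δ w.length ^ l) k (e '' S) < a :=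
    (le_iSup (fun k ↦ netContent (fun w ↦ δ w.length ^ l) k (e '' S)) k).trans_lt ha
  choose W hW hWa using fun k ↦ netContent_lt_iff.1 (hlt k)
  let t (k : ℕ) (w : W k) : Set X := {x | res (e x) w.1.length = w}
  have ht : ∀ᶠ k in atTop, ∀ w, Metric.ediam (t k w) ≤ δ w.1.length := by
    filter_upwards [eventually_forall_ge_atTop.2 he.edist_le] with k hk w
    exact Metric.ediam_le fun x hx y hy ↦ hk _ ((hW k).le_length w w.2) x y (hx.trans hy.symm)
  have hcover (k : ℕ) : S ⊆ ⋃ w, t k w := fun x hx ↦ by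
    obtain ⟨n, hn⟩ := (hW k).exists_res_mem _ (mem_image_of_mem e hx)
    exact mem_iUnion.2 ⟨⟨_, hn⟩, by simp [t]⟩
  calc μH[l] S
    _ ≤ liminf (fun k ↦ ∑' w, Metric.ediam (t k w) ^ l) atTop := by
      refine Measure.hausdorffMeasure_le_liminf_tsum l S δ he.tendsto_mesh t ?_ (.of_forall hcover)
      filter_upwards [ht] with k hk w
      exact (hk w).trans (he.antitone_mesh ((hW k).le_length w w.2))
    _ ≤ a := by
      refine liminf_le_of_frequently_le' (Eventually.frequently ?_)
      filter_upwards [ht] with k hk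
      exact (ENNReal.tsum_le_tsum fun w ↦ ENNReal.rpow_le_rpow (hk w) hl).trans (hWa k).le

theorem exists_isCompact_le_hausdorffMeasure [Countable α] [TopologicalSpace α] [DiscreteTopology α]
    (he : IsCoding e δ) (hl : 0 < l) {C : ℝ≥0∞} (hC : C ≠ ∞)
    (hle : ∀ k S, netContent (fun w ↦ δ w.length ^ l) k (e '' S) ≤ C * μH[l] S) {A : Set X}
    (hA : AnalyticSet (e '' A)) (hinf : μH[l] A = ∞) (r : ℝ≥0) :
    ∃ F ⊆ A, IsCompact F ∧ r ≤ μH[l] F ∧ μH[l] F < ∞ := by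
  obtain ⟨k, hk⟩ : ∃ k, C * r < netContent (fun w ↦ δ w.length ^ l) k (e '' A) := by
    refine lt_iSup_iff.1 (lt_of_lt_of_le ?_ (he.hausdorffMeasure_le_iSup_netContent hl.le A))
    rw [hinf]
    exact ENNReal.mul_lt_top hC.lt_top ENNReal.coe_lt_top
  have hc (x : ℕ → α) : Tendsto (fun n ↦ δ (res x n).length ^ l) atTop (𝓝 0) := by
    simpa [ENNReal.zero_rpow_of_pos hl] using he.tendsto_mesh.ennrpow_const l
  obtain ⟨F, hFA, hF, hrF, hFfin⟩ := exists_isCompact_lt_netContent hc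
    (fun x ↦ ENNReal.rpow_ne_top_of_nonneg hl.le (he.mesh_ne_top _)) hA hk
  have hFe : F ⊆ range e := hFA.trans (image_subset_range e A)
  have himage : e '' (e ⁻¹' F) = F := image_preimage_eq_of_subset hFe
  refine ⟨e ⁻¹' F, ?_, he.isCompact_preimage hF hFe, ?_, ?_⟩
  · exact (preimage_mono hFA).trans (preimage_image_eq A he.injective).subset
  · have := hle k (e ⁻¹' F)
    rw [himage] at this
    exact (lt_of_mul_lt_mul_left' (hrF.trans_le this)).le
  · refine (he.hausdorffMeasure_le_iSup_netContent hl.le _).trans_lt ?_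
    rwa [himage]

end IsCoding

theorem outerMeasure_le_mul_hausdorffMeasure [MeasurableSpace X] [BorelSpace X] {l : ℝ}
    (m : OuterMeasure X) {C r : ℝ≥0∞} (hC : C ≠ ∞) (hC0 : C ≠ 0) (hr : 0 < r)
    (h : ∀ s, Metric.ediam s ≤ r → m s ≤ C * Metric.ediam s ^ l) (S : Set X) :
    m S ≤ C * μH[l] S := by
  have := OuterMeasure.le_mkMetric (C • fun a : ℝ≥0∞ ↦ a ^ l) m r hr h
  rw [OuterMeasure.mkMetric_smul _ hC hC0] at this
  rw [Measure.hausdorffMeasure, ← OuterMeasure.coe_mkMetric]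
  exact this S

end Coding

section Dyadic

variable {ι : Type*}

/-- The code of a point `x : ι → ℝ` given by the numerators of its coordinates rounded down to
multiples of `2⁻¹ ^ (j + 1)`. With this indexing the first `n ≠ 0` terms of the code determine the
coordinates up to an error `2⁻¹ ^ n`. -/
noncomputable def dyadicFloor (x : ι → ℝ) (j : ℕ) (i : ι) : ℤ := ⌊(2 : ℝ) ^ (j + 1) * x i⌋

theorem ofReal_inv_two_pow (n : ℕ) : ENNReal.ofReal (2⁻¹ ^ n) = 2⁻¹ ^ n := by
  rw [ENNReal.ofReal_pow (by norm_num), ENNReal.ofReal_inv_of_pos two_pos, ENNReal.ofReal_ofNat]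

theorem edist_le_inv_two_pow_iff {a b : ℝ} {n : ℕ} :
    edist a b ≤ 2⁻¹ ^ n ↔ |2 ^ n * a - 2 ^ n * b| ≤ 1 := by
  rw [edist_dist, ← ofReal_inv_two_pow, ENNReal.ofReal_le_ofReal_iff (by positivity), Real.dist_eq,
    ← mul_sub, abs_mul, abs_of_pos (show (0 : ℝ) < 2 ^ n by positivity), inv_pow, ← one_div,
    le_div_iff₀' (by positivity)]

theorem edist_le_of_res_dyadicFloor_eq [Fintype ι] {x y : ι → ℝ} {n : ℕ} (hn : n ≠ 0)
    (h : res (dyadicFloor x) n = res (dyadicFloor y) n) : edist x y ≤ 2⁻¹ ^ n := by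
  obtain ⟨m, rfl⟩ := Nat.exists_eq_succ_of_ne_zero hn
  have hm : dyadicFloor x m = dyadicFloor y m := (List.cons.inj h).1
  exact edist_pi_le_iff.2 fun i ↦ edist_le_inv_two_pow_iff.2
    (Int.abs_sub_lt_one_of_floor_eq_floor (congrFun hm i)).le

theorem isCoding_dyadicFloor [Fintype ι] :
    IsCoding (dyadicFloor : (ι → ℝ) → ℕ → ι → ℤ) fun n ↦ 2⁻¹ ^ n where
  mesh_ne_top n := by simp
  antitone_mesh m n h := pow_le_pow_of_le_one zero_le (by simp) h
  tendsto_mesh := ENNReal.tendsto_pow_atTop_nhds_zero_of_lt_one (by simp)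
  edist_le := (eventually_ne_atTop 0).mono fun _ hn _ _ ↦ edist_le_of_res_dyadicFloor_eq hn

theorem measurable_dyadicFloor : Measurable (dyadicFloor : (ι → ℝ) → ℕ → ι → ℤ) :=
  measurable_pi_lambda _ fun _ ↦ measurable_pi_lambda _ fun i ↦
    Int.measurable_floor.comp ((measurable_pi_apply i).const_mul _)

theorem dyadicFloor_mem_cylinder {x y : ι → ℝ} {n : ℕ}
    (h : ∀ i, ⌊(2 : ℝ) ^ n * x i⌋ = ⌊(2 : ℝ) ^ n * y i⌋) :
    dyadicFloor x ∈ cylinder (dyadicFloor y) n := by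
  intro j hj
  obtain ⟨m, rfl⟩ := Nat.exists_eq_add_of_le (Nat.succ_le_of_lt hj)
  have hdiv (z : ι → ℝ) (i : ι) :
      dyadicFloor z j i = ⌊(2 : ℝ) ^ (j + 1 + m) * z i⌋ / ((2 ^ m : ℕ) : ℤ) := by
    rw [← Int.floor_div_natCast, dyadicFloor]
    congr 1
    push_cast
    field_simp
    ring
  ext i
  rw [hdiv, hdiv, h]

theorem floor_mem_Icc_of_abs_sub_le_one {a b : ℝ} (h : |a - b| ≤ 1) :
    ⌊a⌋ ∈ Finset.Icc (⌊b⌋ - 1) (⌊b⌋ + 1) := by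
  rw [abs_le] at h
  rw [Finset.mem_Icc, ← Int.floor_sub_one, ← Int.floor_add_one]
  exact ⟨Int.floor_mono (by linarith), Int.floor_mono (by linarith)⟩

theorem netContent_image_dyadicFloor_le_of_ediam_le [Fintype ι] {c : List (ι → ℤ) → ℝ≥0∞}
    {k n : ℕ} {a : ℝ≥0∞} (hc : ∀ w, w.length = n → c w ≤ a) (hkn : k ≤ n) {s : Set (ι → ℝ)}
    (hs : Metric.ediam s ≤ 2⁻¹ ^ n) :
    netContent c k (dyadicFloor '' s) ≤ 3 ^ Fintype.card ι * a := by
  classical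
  rcases s.eq_empty_or_nonempty with rfl | ⟨x, hx⟩
  · simp
  let cell (v : ι → ℤ) : Set (ι → ℝ) := {y | ∀ i, ⌊(2 : ℝ) ^ n * y i⌋ = v i}
  have hcell (v : ι → ℤ) : netContent c k (dyadicFloor '' cell v) ≤ a := by
    rcases (cell v).eq_empty_or_nonempty with h | ⟨y, hy⟩
    · simp [h]
    · refine (measure_mono ?_).trans
        ((netContent_cylinder_le (dyadicFloor y) hkn).trans (hc _ (by simp)))
      rintro _ ⟨z, hz, rfl⟩
      exact dyadicFloor_mem_cylinder fun i ↦ (hz i).trans (hy i).symm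
  let I : Finset (ι → ℤ) := Fintype.piFinset fun i ↦
    Finset.Icc (⌊(2 : ℝ) ^ n * x i⌋ - 1) (⌊(2 : ℝ) ^ n * x i⌋ + 1)
  have hI : I.card = 3 ^ Fintype.card ι := by
    have hcard (z : ℤ) : (Finset.Icc (z - 1) (z + 1)).card = 3 := by
      rw [Int.card_Icc]
      lia
    simp [I, Fintype.card_piFinset, hcard]
  have hcover : dyadicFloor '' s ⊆ ⋃ v ∈ I, dyadicFloor '' cell v := by
    rintro _ ⟨y, hy, rfl⟩
    refine mem_biUnion (x := fun i ↦ ⌊(2 : ℝ) ^ n * y i⌋) (Fintype.mem_piFinset.2 fun i ↦ ?_)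
      (mem_image_of_mem _ fun i ↦ rfl)
    refine floor_mem_Icc_of_abs_sub_le_one (edist_le_inv_two_pow_iff.1 ?_)
    exact (edist_le_pi_edist y x i).trans ((Metric.edist_le_ediam_of_mem hy hx).trans hs)
  calc netContent c k (dyadicFloor '' s)
    _ ≤ ∑ v ∈ I, netContent c k (dyadicFloor '' cell v) :=
      (measure_mono hcover).trans (measure_biUnion_finset_le I _)
    _ ≤ ∑ _v ∈ I, a := Finset.sum_le_sum fun v _ ↦ hcell v
    _ = 3 ^ Fintype.card ι * a := by simp [hI]

theorem exists_le_inv_two_pow_le_two_mul {a : ℝ≥0∞} (h0 : a ≠ 0) {k : ℕ} (hk : a ≤ 2⁻¹ ^ k) :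
    ∃ n ≥ k, a ≤ 2⁻¹ ^ n ∧ 2⁻¹ ^ n ≤ 2 * a := by
  classical
  have h := ENNReal.exists_inv_two_pow_lt h0
  have hkn : k < Nat.find h := by
    by_contra! hle
    exact ((Nat.find_spec h).trans_le hk).not_ge (pow_le_pow_of_le_one zero_le (by simp) hle)
  obtain ⟨n, hn⟩ := Nat.exists_eq_succ_of_ne_zero (Nat.ne_zero_of_lt hkn)
  refine ⟨n, Nat.le_of_lt_succ (hn ▸ hkn), not_lt.1 (Nat.find_min h (hn ▸ n.lt_succ_self)), ?_⟩
  calc (2 : ℝ≥0∞)⁻¹ ^ n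
    _ = 2 * 2⁻¹ ^ (n + 1) := by
      rw [pow_succ', ← mul_assoc, ENNReal.mul_inv_cancel two_ne_zero ENNReal.ofNat_ne_top, one_mul]
    _ ≤ 2 * a := by
      gcongr
      exact (hn ▸ Nat.find_spec h).le

variable [Fintype ι] {l : ℝ}

theorem netContent_image_dyadicFloor_le_ediam_rpow (hl : 0 < l) {k : ℕ} {s : Set (ι → ℝ)}
    (hs : Metric.ediam s ≤ 2⁻¹ ^ k) :
    netContent (fun w ↦ (2⁻¹ ^ w.length) ^ l) k (dyadicFloor '' s) ≤
      3 ^ Fintype.card ι * 2 ^ l * Metric.ediam s ^ l := by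
  have hcost (n : ℕ) (w : List (ι → ℤ)) (hw : w.length = n) :
      ((2 : ℝ≥0∞)⁻¹ ^ w.length) ^ l ≤ (2⁻¹ ^ n) ^ l := by rw [hw]
  rcases eq_or_ne (Metric.ediam s) 0 with h0 | h0
  · have hlim : Tendsto (fun n ↦ 3 ^ Fintype.card ι * ((2 : ℝ≥0∞)⁻¹ ^ n) ^ l) atTop (𝓝 0) := by
      have := ENNReal.Tendsto.const_mul (a := 3 ^ Fintype.card ι)
        (isCoding_dyadicFloor (ι := ι).tendsto_mesh.ennrpow_const l) (.inr (by finiteness))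
      rwa [ENNReal.zero_rpow_of_pos hl, mul_zero] at this
    refine (ge_of_tendsto hlim ?_).trans zero_le
    filter_upwards [eventually_ge_atTop k] with n hkn
    exact netContent_image_dyadicFloor_le_of_ediam_le (hcost n) hkn (h0 ▸ zero_le)
  · obtain ⟨n, hkn, hsn, hn⟩ := exists_le_inv_two_pow_le_two_mul h0 hs
    refine (netContent_image_dyadicFloor_le_of_ediam_le (hcost n) hkn hsn).trans ?_
    rw [mul_assoc, ← ENNReal.mul_rpow_of_nonneg _ _ hl.le]
    gcongr

theorem netContent_image_dyadicFloor_le_hausdorffMeasure (hl : 0 < l) (k : ℕ) (S : Set (ι → ℝ)) :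
    netContent (fun w ↦ (2⁻¹ ^ w.length) ^ l) k (dyadicFloor '' S) ≤
      3 ^ Fintype.card ι * 2 ^ l * μH[l] S := by
  rw [← OuterMeasure.comap_apply]
  refine outerMeasure_le_mul_hausdorffMeasure _ (r := 2⁻¹ ^ k) (by finiteness) (by simp)
    (ENNReal.pow_pos (by simp) k) (fun s hs ↦ ?_) S
  rw [OuterMeasure.comap_apply]
  exact netContent_image_dyadicFloor_le_ediam_rpow hl hs

end Dyadic

theorem analyticSet_image_of_measurable {X Y : Type*} [TopologicalSpace X] [MeasurableSpace X]
    [BorelSpace X] [TopologicalSpace Y] [SecondCountableTopology Y] [MeasurableSpace Y]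
    [OpensMeasurableSpace Y] {A : Set X} (hA : AnalyticSet A) {f : X → Y} (hf : Measurable f) :
    AnalyticSet (f '' A) := by
  rw [AnalyticSet] at hA
  obtain rfl | ⟨g, hg, rfl⟩ := hA
  · simpa using analyticSet_empty
  · rw [← range_comp, ← image_univ]
    exact MeasurableSet.univ.analyticSet_image (hf.comp hg.measurable)

theorem exists_isCompact_le_hausdorffMeasure_pi {ι : Type*} [Fintype ι] {A : Set (ι → ℝ)}
    (hA : AnalyticSet A) {l : ℝ} (hl : 0 < l) (hinf : μH[l] A = ∞) (r : ℝ≥0) :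
    ∃ F ⊆ A, IsCompact F ∧ r ≤ μH[l] F ∧ μH[l] F < ∞ :=
  isCoding_dyadicFloor.exists_isCompact_le_hausdorffMeasure hl (by finiteness)
    (netContent_image_dyadicFloor_le_hausdorffMeasure hl)
    (analyticSet_image_of_measurable hA measurable_dyadicFloor) hinf r

theorem davies_subset_general {X ι : Type*} [EMetricSpace X] [MeasurableSpace X] [BorelSpace X]
    [Fintype ι] {f : X → ι → ℝ} {K K' : ℝ≥0} (hf : LipschitzWith K f) (hf' : AntilipschitzWith K' f)
    {A : Set X} (hA : AnalyticSet A) {l : ℝ} (hl : 0 < l) (hinf : μH[l] A = ∞) (r : ℝ≥0) :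
    ∃ F ⊆ A, IsCompact F ∧ r ≤ μH[l] F ∧ μH[l] F < ∞ := by
  have hinf' : μH[l] (f '' A) = ∞ := by
    by_contra h
    have := hf'.le_hausdorffMeasure_image hl.le A
    rw [hinf, top_le_iff] at this
    exact ENNReal.mul_ne_top (by finiteness) h this
  obtain ⟨F, hFA, hF, hrF, hFfin⟩ := exists_isCompact_le_hausdorffMeasure_pi
    (hA.image_of_continuous hf.continuous) hl hinf' (K ^ l * r + 1)
  have himage : f '' (f ⁻¹' F) = F :=
    image_preimage_eq_of_subset (hFA.trans (image_subset_range f A))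
  refine ⟨f ⁻¹' F, ?_, ?_, ?_, ?_⟩
  · exact (preimage_mono hFA).trans (preimage_image_eq A hf'.injective).subset
  · exact (hf'.isInducing hf.continuous).isCompact_preimage' hF (hFA.trans (image_subset_range f A))
  · have hlt : (K : ℝ≥0∞) ^ l * r < K ^ l * μH[l] (f ⁻¹' F) := by
      calc (K : ℝ≥0∞) ^ l * r
        _ < K ^ l * r + 1 := ENNReal.lt_add_right (by finiteness) one_ne_zero
        _ ≤ μH[l] F := by simpa [ENNReal.coe_rpow_of_nonneg _ hl.le] using hrF
        _ ≤ K ^ l * μH[l] (f ⁻¹' F) := by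
          simpa [himage] using hf.hausdorffMeasure_image_le hl.le (f ⁻¹' F)
    exact (lt_of_mul_lt_mul_left' hlt).le
  · refine (hf'.le_hausdorffMeasure_image hl.le _).trans_lt ?_
    rw [himage]
    exact ENNReal.mul_lt_top (by finiteness) hFfin

/-- Davies' subset theorem: an analytic set `A ⊆ ℝ` with `ℋ^λ(A) = ∞`
contains, for every `r > 0`, a compact subset `F` with `r ≤ ℋ^λ(F) < ∞`. -/
theorem davies_subset
    (A : Set ℝ) (hA : MeasureTheory.AnalyticSet A)
    (l : ℝ) (hl : 0 < l) (hinf : μH[l] A = ∞) :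
    ∀ r : ℝ, 0 < r → ∃ F : Set ℝ, F ⊆ A ∧ IsCompact F ∧
      ENNReal.ofReal r ≤ μH[l] F ∧ μH[l] F < ∞ := by
  have hf := (IsometryEquiv.funUnique Unit ℝ).symm.isometry
  exact fun r _ ↦ davies_subset_general hf.lipschitz hf.antilipschitz hA hl hinf r.toNNReal
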